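/- Let B = {(e1,e2,e3) ∈ E³ : e1·e2 = 0, e2·e3 = 0, e1·e3 = 1}. Then B has exactly 967680 elements, the Weyl group W acts transitively on B, and for every (e1,e2,e3) ∈ B there are exactly 6 roots e ∈ E with e·e1 = e·e2 = e·e3 = 1. -/

import Mathlib

noncomputable section

/-- The standard dot product on ℝ^8. -/
def dot (a b : Fin 8 → ℝ) : ℝ := ∑ i, a i * b i

/-- Membership in the E8 lattice Λ: all coordinates are integers or all lie in ℤ + 1/2,
and the coordinates sum to an even integer. -/
def inLambda (a : Fin 8 → ℝ) : Prop :=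
  ((∀ i, ∃ n : ℤ, a i = n) ∨ (∀ i, ∃ n : ℤ, a i = n + 1 / 2)) ∧
    ∃ n : ℤ, (∑ i, a i) = 2 * n

/-- The E8 root system E: lattice vectors of squared norm 2. -/
def isRoot (a : Fin 8 → ℝ) : Prop := inLambda a ∧ dot a a = 2

/-- The Weyl group W: linear isometries of ℝ^8 mapping the root system E onto itself. -/
def IsWeyl (w : (Fin 8 → ℝ) ≃ₗ[ℝ] (Fin 8 → ℝ)) : Prop :=
  (∀ a b : Fin 8 → ℝ, dot (w a) (w b) = dot a b) ∧
    (⇑w '' {a | isRoot a} = {a | isRoot a})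

/-! ### Integer model of the roots (doubled coordinates) -/

def ldot : List ℤ → List ℤ → ℤ
  | x :: xs, y :: ys => x * y + ldot xs ys
  | _, _ => 0

def gen (S : List ℤ) : ℕ → ℤ → List (List ℤ)
  | 0, b => if b = 0 then [[]] else []
  | n + 1, b => S.flatMap fun x =>
      if x * x ≤ b then (gen S n (b - x * x)).map (x :: ·) else []

def rootL : List (List ℤ) :=
  (gen [-2, 0, 2] 8 8 ++ gen [-1, 1] 8 8).filter fun l => l.sum % 4 = 0

def toVec (l : List ℤ) : Fin 8 → ℝ := fun i => (l.getD i 0 : ℝ) / 2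

def sel (c : List (List ℤ × ℤ)) : List (List ℤ) :=
  rootL.filter fun r => c.all fun p => ldot r p.1 = p.2

def chk (F : List (List ℤ)) (b : List ℤ) : Bool :=
  let C := sel (F.map fun f => (f, ldot b f))
  C.all fun r => ldot r b ≤ 8 &&
    (decide (r = b) || C.any fun c => decide (ldot c r = 4) && decide (ldot r b < ldot c b))

def b1 : List ℤ := [2, 2, 0, 0, 0, 0, 0, 0]
def b2 : List ℤ := [0, 0, 0, 2, 2, 0, 0, 0]
def b3 : List ℤ := [2, 0, 2, 0, 0, 0, 0, 0]

theorem chk1 : chk [] b1 = true := by decide +kernel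
theorem chk2 : chk [b1] b2 = true := by decide +kernel
theorem chk3 : chk [b1, b2] b3 = true := by decide +kernel
theorem nodupL : rootL.Nodup := by decide +kernel
theorem cnt0 : (sel []).length = 240 := by decide +kernel
theorem cnt1 : (sel [(b1, 0)]).length = 126 := by decide +kernel
theorem cnt2 : (sel [(b1, 4), (b2, 0)]).length = 32 := by decide +kernel
theorem cnt3 : (sel [(b1, 4), (b2, 4), (b3, 4)]).length = 6 := by decide +kernel
theorem memb : b1 ∈ rootL ∧ b2 ∈ rootL ∧ b3 ∈ rootL := by decide +kernel

theorem ldot_self_nonneg : ∀ l : List ℤ, 0 ≤ ldot l l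
  | [] => by simp [ldot]
  | x :: xs => by
    have := ldot_self_nonneg xs
    have := mul_self_nonneg x
    simp only [ldot]; omega

theorem mem_gen (S : List ℤ) : ∀ (n : ℕ) (b : ℤ) (l : List ℤ),
    l ∈ gen S n b ↔ l.length = n ∧ (∀ x ∈ l, x ∈ S) ∧ ldot l l = b
  | 0, b, l => by
    simp only [gen]
    split_ifs with h
    · subst h; cases l <;> simp [ldot]
    · cases l <;> simp [ldot]; exact fun h' => h h'.symm
  | n + 1, b, l => by
    simp only [gen, List.mem_flatMap]
    constructor
    · rintro ⟨x, hx, h⟩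
      split_ifs at h with hb
      · rw [List.mem_map] at h
        obtain ⟨m, hm, rfl⟩ := h
        obtain ⟨h1, h2, h3⟩ := (mem_gen S n _ m).1 hm
        refine ⟨by simp [h1], ?_, ?_⟩
        · intro y hy
          rcases List.mem_cons.1 hy with rfl | hy
          · exact hx
          · exact h2 y hy
        · simp only [ldot]; omega
      · simp at h
    · rintro ⟨h1, h2, h3⟩
      cases l with
      | nil => simp at h1
      | cons x m =>
        simp only [ldot] at h3
        have := ldot_self_nonneg m
        refine ⟨x, h2 x (by simp), ?_⟩
        rw [if_pos (by omega), List.mem_map]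
        refine ⟨m, (mem_gen S n _ m).2 ⟨by simpa using h1, fun y hy => h2 y (by simp [hy]), by omega⟩, rfl⟩

theorem mem_rootL (l : List ℤ) : l ∈ rootL ↔ l.length = 8 ∧ ldot l l = 8 ∧ l.sum % 4 = 0 ∧
    ((∀ x ∈ l, x ∈ [-2, 0, 2]) ∨ (∀ x ∈ l, x ∈ [-1, 1])) := by
  simp only [rootL, List.mem_filter, List.mem_append, mem_gen, decide_eq_true_eq]
  tauto

theorem len8 {l : List ℤ} (h : l.length = 8) :
    ∃ a b c d e f g k, l = [a, b, c, d, e, f, g, k] := by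
  match l, h with
  | [a, b, c, d, e, f, g, k], _ => exact ⟨a, b, c, d, e, f, g, k, rfl⟩

theorem dot_toVec {l m : List ℤ} (hl : l.length = 8) (hm : m.length = 8) :
    dot (toVec l) (toVec m) = (ldot l m : ℝ) / 4 := by
  obtain ⟨a, b, c, d, e, f, g, k, rfl⟩ := len8 hl
  obtain ⟨a', b', c', d', e', f', g', k', rfl⟩ := len8 hm
  simp [dot, toVec, ldot, Fin.sum_univ_eight]
  ring

theorem toVec_inj {l m : List ℤ} (hl : l.length = 8) (hm : m.length = 8)
    (h : toVec l = toVec m) : l = m := by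
  apply List.ext_getElem (by omega)
  intro i h1 h2
  have := congrFun h ⟨i, by omega⟩
  simp only [toVec, List.getD_eq_getElem _ _ h1, List.getD_eq_getElem _ _ h2] at this
  have h3 : ((l[i] : ℤ) : ℝ) = (m[i] : ℤ) := by linarith
  exact_mod_cast h3

theorem isRoot_toVec {l : List ℤ} (h : l ∈ rootL) : isRoot (toVec l) := by
  obtain ⟨h1, h2, h3, h4⟩ := (mem_rootL l).1 h
  refine ⟨⟨?_, ?_⟩, ?_⟩
  · rcases h4 with h4 | h4
    · left
      intro i
      have hi : (i : ℕ) < l.length := by omega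
      have := h4 l[(i : ℕ)] (List.getElem_mem hi)
      simp only [toVec, List.getD_eq_getElem _ _ hi]
      simp only [List.mem_cons, List.not_mem_nil, or_false] at this
      rcases this with e | e | e <;> rw [e]
      · exact ⟨-1, by norm_num⟩
      · exact ⟨0, by norm_num⟩
      · exact ⟨1, by norm_num⟩
    · right
      intro i
      have hi : (i : ℕ) < l.length := by omega
      have := h4 l[(i : ℕ)] (List.getElem_mem hi)
      simp only [toVec, List.getD_eq_getElem _ _ hi]
      simp only [List.mem_cons, List.not_mem_nil, or_false] at this
      rcases this with e | e <;> rw [e]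
      · exact ⟨-1, by norm_num⟩
      · exact ⟨0, by norm_num⟩
  · obtain ⟨n, hn⟩ := Int.dvd_of_emod_eq_zero h3
    refine ⟨n, ?_⟩
    have hn' : (l.sum : ℝ) = 4 * n := by exact_mod_cast hn
    obtain ⟨a, b, c, d, e, f, g, k, rfl⟩ := len8 h1
    simp [toVec, Fin.sum_univ_eight] at hn' ⊢
    linarith
  · rw [dot_toVec h1 h1, h2]; norm_num

theorem exists_list {a : Fin 8 → ℝ} (h : isRoot a) : ∃ l ∈ rootL, a = toVec l := by
  obtain ⟨⟨h1, n, hn⟩, h2⟩ := h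
  have key : ∃ z : Fin 8 → ℤ, (∀ i, a i = (z i : ℝ) / 2) ∧
      ((∀ i, z i % 2 = 0) ∨ (∀ i, z i % 2 = 1)) := by
    rcases h1 with h1 | h1
    · choose y hy using h1
      exact ⟨fun i => 2 * y i, fun i => by rw [hy]; push_cast; ring, Or.inl fun i => by dsimp only; omega⟩
    · choose y hy using h1
      exact ⟨fun i => 2 * y i + 1, fun i => by rw [hy]; push_cast; ring, Or.inr fun i => by dsimp only; omega⟩
  obtain ⟨z, hz, hp⟩ := key
  have hs : ∑ i, z i * z i = 8 := by
    have : (∑ i, (z i : ℝ) * z i) = 8 := by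
      simp only [dot, hz, Fin.sum_univ_eight] at h2 ⊢
      linarith
    exact_mod_cast this
  have ht : ∑ i, z i = 4 * n := by
    have : (∑ i, (z i : ℝ)) = 4 * n := by
      simp only [hz, Fin.sum_univ_eight] at hn ⊢
      linarith
    exact_mod_cast this
  have hb : ∀ i, -2 ≤ z i ∧ z i ≤ 2 := by
    intro i
    have : z i * z i ≤ ∑ i, z i * z i :=
      Finset.single_le_sum (f := fun i => z i * z i) (fun j _ => mul_self_nonneg _) (Finset.mem_univ i)
    constructor <;> nlinarith
  refine ⟨List.ofFn z, (mem_rootL _).2 ⟨by simp, ?_, ?_, ?_⟩, ?_⟩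
  · rw [← hs]
    simp [List.ofFn_succ, ldot, Fin.sum_univ_succ]
  · rw [List.sum_ofFn, ht]; omega
  · simp only [List.mem_ofFn, List.mem_cons, List.not_mem_nil, or_false]
    rcases hp with hp | hp
    · left; rintro x ⟨i, rfl⟩; have := hp i; have := hb i; omega
    · right; rintro x ⟨i, rfl⟩; have := hp i; have := hb i; omega
  · funext i
    rw [hz, toVec, List.getD_eq_getElem _ _ (by simp), List.getElem_ofFn]

/-! ### Counting -/

theorem ncard_sel (c : List (List ℤ × ℤ)) (hc : ∀ p ∈ c, p.1.length = 8) :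
    {e | isRoot e ∧ ∀ p ∈ c, dot e (toVec p.1) = (p.2 : ℝ) / 4}.ncard = (sel c).length := by
  classical
  have hnd : (sel c).Nodup := nodupL.filter _
  have hS : {e | isRoot e ∧ ∀ p ∈ c, dot e (toVec p.1) = (p.2 : ℝ) / 4} =
      toVec '' ((sel c).toFinset : Set (List ℤ)) := by
    ext e
    simp only [Set.mem_ofPred_eq, Set.mem_image, List.coe_toFinset, sel, List.mem_filter,
      List.all_eq_true, decide_eq_true_eq]
    constructor
    · rintro ⟨he, hd⟩
      obtain ⟨l, hl, rfl⟩ := exists_list he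
      refine ⟨l, ⟨hl, fun p hp => ?_⟩, rfl⟩
      have := hd p hp
      rw [dot_toVec ((mem_rootL l).1 hl).1 (hc p hp)] at this
      have h3 : (ldot l p.1 : ℝ) = p.2 := by linarith
      exact_mod_cast h3
    · rintro ⟨l, ⟨hl, hd⟩, rfl⟩
      refine ⟨isRoot_toVec hl, fun p hp => ?_⟩
      rw [dot_toVec ((mem_rootL l).1 hl).1 (hc p hp), hd p hp]
  rw [hS, Set.ncard_image_of_injOn, Set.ncard_coe_finset, List.toFinset_card_of_nodup hnd]
  intro x hx y hy h
  simp only [List.coe_toFinset, sel, List.mem_filter, Set.mem_ofPred_eq] at hx hy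
  exact toVec_inj ((mem_rootL x).1 hx.1).1 ((mem_rootL y).1 hy.1).1 h

/-! ### The Weyl group -/

theorem dot_sub_left (a b c : Fin 8 → ℝ) : dot (a - b) c = dot a c - dot b c := by
  simp [dot, sub_mul]

theorem dot_comm' (a b : Fin 8 → ℝ) : dot a b = dot b a := by
  simp [dot, mul_comm]

theorem dot_smul_left (t : ℝ) (a b : Fin 8 → ℝ) : dot (t • a) b = t * dot a b := by
  simp [dot, Finset.mul_sum, mul_assoc]

theorem dot_add_left (a b c : Fin 8 → ℝ) : dot (a + b) c = dot a c + dot b c := by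
  simp [dot, add_mul, Finset.sum_add_distrib]

theorem dot_sub_right (a b c : Fin 8 → ℝ) : dot a (b - c) = dot a b - dot a c := by
  rw [dot_comm', dot_sub_left, dot_comm' b, dot_comm' c]

theorem dot_smul_right (t : ℝ) (a b : Fin 8 → ℝ) : dot a (t • b) = t * dot a b := by
  rw [dot_comm', dot_smul_left, dot_comm']

def latt : AddSubgroup (Fin 8 → ℝ) where
  carrier := {a | inLambda a}
  zero_mem' := ⟨Or.inl fun i => ⟨0, by simp⟩, 0, by simp⟩
  neg_mem' := by
    rintro a ⟨h, n, hn⟩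
    refine ⟨?_, -n, by simp [hn]⟩
    rcases h with h | h
    · left; intro i; obtain ⟨m, hm⟩ := h i; exact ⟨-m, by simp [hm]⟩
    · right; intro i; obtain ⟨m, hm⟩ := h i; exact ⟨-m - 1, by simp [hm]; ring⟩
  add_mem' := by
    rintro a b ⟨ha, n, hn⟩ ⟨hb, k, hk⟩
    refine ⟨?_, n + k, by simp [Finset.sum_add_distrib, hn, hk]; ring⟩
    rcases ha with ha | ha <;> rcases hb with hb | hb
    · left; intro i; obtain ⟨m, hm⟩ := ha i; obtain ⟨m', hm'⟩ := hb i
      exact ⟨m + m', by simp [hm, hm']⟩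
    · right; intro i; obtain ⟨m, hm⟩ := ha i; obtain ⟨m', hm'⟩ := hb i
      exact ⟨m + m', by simp [hm, hm']; ring⟩
    · right; intro i; obtain ⟨m, hm⟩ := ha i; obtain ⟨m', hm'⟩ := hb i
      exact ⟨m + m', by simp [hm, hm']; ring⟩
    · left; intro i; obtain ⟨m, hm⟩ := ha i; obtain ⟨m', hm'⟩ := hb i
      exact ⟨m + m' + 1, by simp [hm, hm']; ring⟩

theorem dot_int {a b : Fin 8 → ℝ} (ha : inLambda a) (hb : inLambda b) : ∃ k : ℤ, dot a b = k := by
  have mixed : ∀ a b : Fin 8 → ℝ, (∀ i, ∃ n : ℤ, a i = n) → (∃ n : ℤ, (∑ i, a i) = 2 * n) →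
      (∀ i, ∃ n : ℤ, b i = n + 1 / 2) → ∃ k : ℤ, dot a b = k := by
    intro a b h1 ⟨n, hn⟩ h2
    choose x hx using h1
    choose y hy using h2
    refine ⟨∑ i, x i * y i + n, ?_⟩
    simp only [dot, hx, hy, Fin.sum_univ_eight] at hn ⊢
    push_cast
    linarith
  obtain ⟨h1, n, hn⟩ := ha
  obtain ⟨h2, k, hk⟩ := hb
  rcases h1 with h1 | h1 <;> rcases h2 with h2 | h2
  · choose x hx using h1
    choose y hy using h2
    exact ⟨∑ i, x i * y i, by simp [dot, hx, hy]⟩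
  · exact mixed a b h1 ⟨n, hn⟩ h2
  · rw [dot_comm']; exact mixed b a h2 ⟨k, hk⟩ h1
  · choose x hx using h1
    choose y hy using h2
    refine ⟨∑ i, x i * y i + n + k - 2, ?_⟩
    simp only [dot, hx, hy, Fin.sum_univ_eight] at hn hk ⊢
    push_cast
    linarith

def reflFun (c : Fin 8 → ℝ) : (Fin 8 → ℝ) →ₗ[ℝ] (Fin 8 → ℝ) where
  toFun x := x - dot x c • c
  map_add' x y := by rw [dot_add_left, add_smul]; abel
  map_smul' t x := by simp [dot_smul_left, smul_sub, mul_smul]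

theorem reflFun_apply (c x : Fin 8 → ℝ) : reflFun c x = x - dot x c • c := rfl

theorem reflFun_invol {c : Fin 8 → ℝ} (hc : dot c c = 2) (x : Fin 8 → ℝ) :
    reflFun c (reflFun c x) = x := by
  simp only [reflFun_apply, dot_sub_left, dot_smul_left, hc]
  module

def refl8 (c : Fin 8 → ℝ) (hc : dot c c = 2) : (Fin 8 → ℝ) ≃ₗ[ℝ] (Fin 8 → ℝ) :=
  LinearEquiv.ofInvolutive (reflFun c) (reflFun_invol hc)

theorem refl8_apply (c : Fin 8 → ℝ) (hc : dot c c = 2) (x : Fin 8 → ℝ) :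
    refl8 c hc x = x - dot x c • c := rfl

theorem refl8_weyl {c : Fin 8 → ℝ} (h : isRoot c) : IsWeyl (refl8 c h.2) := by
  have hd : ∀ a b : Fin 8 → ℝ, dot (refl8 c h.2 a) (refl8 c h.2 b) = dot a b := by
    intro a b
    simp only [refl8_apply, dot_sub_left, dot_smul_left, dot_sub_right, dot_smul_right, h.2,
      dot_comm' c b]
    ring
  have hr : ∀ a, isRoot a → isRoot (refl8 c h.2 a) := by
    intro a ha
    refine ⟨?_, by rw [hd, ha.2]⟩
    obtain ⟨k, hk⟩ := dot_int ha.1 h.1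
    rw [refl8_apply, hk]
    have : a - k • c ∈ latt := latt.sub_mem ha.1 (latt.zsmul_mem h.1 k)
    rwa [← Int.cast_smul_eq_zsmul ℝ] at this
  refine ⟨hd, Set.Subset.antisymm ?_ ?_⟩
  · rintro _ ⟨a, ha, rfl⟩
    exact hr a ha
  · intro a ha
    exact ⟨refl8 c h.2 a, hr a ha, reflFun_invol h.2 a⟩

theorem IsWeyl.root {w} (h : IsWeyl w) {a : Fin 8 → ℝ} (ha : isRoot a) : isRoot (w a) := by
  have : w a ∈ {a | isRoot a} := h.2 ▸ ⟨a, ha, rfl⟩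
  exact this

theorem IsWeyl.symm' {w} (h : IsWeyl w) : IsWeyl w.symm := by
  refine ⟨fun a b => ?_, ?_⟩
  · rw [← h.1]; simp
  · conv_lhs => rw [← h.2]
    rw [← Set.image_comp]
    simp

theorem IsWeyl.trans' {w v} (h : IsWeyl w) (h' : IsWeyl v) : IsWeyl (w.trans v) := by
  refine ⟨fun a b => ?_, ?_⟩
  · simp [h.1, h'.1]
  · have : (⇑(w.trans v) : (Fin 8 → ℝ) → (Fin 8 → ℝ)) = ⇑v ∘ ⇑w := rfl
    rw [this, Set.image_comp, h.2, h'.2]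

theorem IsWeyl.one : IsWeyl (LinearEquiv.refl ℝ _) := ⟨fun _ _ => rfl, Set.image_id _⟩

theorem weyl_step {a b : Fin 8 → ℝ} (ha : isRoot a) (hb : isRoot b) (hab : dot a b = 1) :
    ∃ w, IsWeyl w ∧ w a = b ∧ ∀ f, dot a f = dot b f → w f = f := by
  have hr : isRoot (a - b) := by
    refine ⟨latt.sub_mem ha.1 hb.1, ?_⟩
    rw [dot_sub_left, dot_sub_right, dot_sub_right, ha.2, hb.2, dot_comm' b a, hab]
    norm_num
  refine ⟨_, refl8_weyl hr, ?_, ?_⟩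
  · rw [refl8_apply, dot_sub_right, ha.2, hab]
    module
  · intro f hf
    rw [refl8_apply, dot_comm', dot_sub_left, hf]
    simp

theorem chk_spec {F : List (List ℤ)} {b : List ℤ} (hF : ∀ f ∈ F, f.length = 8)
    (hb : b ∈ rootL) (h : chk F b = true) (e : Fin 8 → ℝ) (he : isRoot e)
    (hd : ∀ f ∈ F, dot e (toVec f) = dot (toVec b) (toVec f)) :
    ∃ w, IsWeyl w ∧ w e = toVec b ∧ ∀ f ∈ F, w (toVec f) = toVec f := by
  have hbl := ((mem_rootL b).1 hb).1
  have hms : ∀ l, l ∈ sel (F.map fun f => (f, ldot b f)) ↔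
      l ∈ rootL ∧ ∀ f ∈ F, ldot l f = ldot b f := by
    intro l
    simp [sel, List.mem_filter]
  simp only [chk, List.all_eq_true, Bool.and_eq_true, Bool.or_eq_true, decide_eq_true_eq,
    List.any_eq_true] at h
  have main : ∀ n : ℕ, ∀ l ∈ sel (F.map fun f => (f, ldot b f)), (8 - ldot l b).toNat ≤ n →
      ∃ w, IsWeyl w ∧ w (toVec l) = toVec b ∧ ∀ f ∈ F, w (toVec f) = toVec f := by
    intro n
    induction n with
    | zero =>
      intro l hl hn
      obtain ⟨h8, rfl | ⟨c, hc, h4, hlt⟩⟩ := h l hl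
      · exact ⟨_, IsWeyl.one, rfl, fun _ _ => rfl⟩
      · have := (h c hc).1
        omega
    | succ n ih =>
      intro l hl hn
      obtain ⟨h8, rfl | ⟨c, hc, h4, hlt⟩⟩ := h l hl
      · exact ⟨_, IsWeyl.one, rfl, fun _ _ => rfl⟩
      · have := (h c hc).1
        obtain ⟨w, hw, hwc, hwF⟩ := ih c hc (by omega)
        obtain ⟨hl1, hl2⟩ := (hms l).1 hl
        obtain ⟨hc1, hc2⟩ := (hms c).1 hc
        have hll := ((mem_rootL l).1 hl1).1
        have hcl := ((mem_rootL c).1 hc1).1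
        obtain ⟨v, hv, hvl, hvF⟩ := weyl_step (isRoot_toVec hl1) (isRoot_toVec hc1)
          (by rw [dot_comm', dot_toVec hcl hll, h4]; norm_num)
        refine ⟨v.trans w, hv.trans' hw, by simp [hvl, hwc], fun f hf => ?_⟩
        have : v (toVec f) = toVec f := hvF _ (by
          rw [dot_toVec hll (hF f hf), dot_toVec hcl (hF f hf), hl2 f hf, hc2 f hf])
        simp [this, hwF f hf]
  obtain ⟨l, hl, rfl⟩ := exists_list he
  refine main _ l ((hms l).2 ⟨hl, fun f hf => ?_⟩) le_rfl
  have := hd f hf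
  rw [dot_toVec ((mem_rootL l).1 hl).1 (hF f hf), dot_toVec hbl (hF f hf)] at this
  have h3 : (ldot l f : ℝ) = ldot b f := by linarith
  exact_mod_cast h3

theorem d21 : dot (toVec b2) (toVec b1) = 0 := by
  rw [dot_toVec rfl rfl, show ldot b2 b1 = 0 from by decide +kernel]; norm_num
theorem d31 : dot (toVec b3) (toVec b1) = 1 := by
  rw [dot_toVec rfl rfl, show ldot b3 b1 = 4 from by decide +kernel]; norm_num
theorem d32 : dot (toVec b3) (toVec b2) = 0 := by
  rw [dot_toVec rfl rfl, show ldot b3 b2 = 0 from by decide +kernel]; norm_num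

theorem norm1 {e1 : Fin 8 → ℝ} (h1 : isRoot e1) : ∃ w, IsWeyl w ∧ w e1 = toVec b1 := by
  obtain ⟨w, hw, h, _⟩ := chk_spec (by simp) memb.1 chk1 e1 h1 (by simp)
  exact ⟨w, hw, h⟩

theorem norm2 {e1 e2 : Fin 8 → ℝ} (h1 : isRoot e1) (h2 : isRoot e2) (h12 : dot e1 e2 = 0) :
    ∃ w, IsWeyl w ∧ w e1 = toVec b1 ∧ w e2 = toVec b2 := by
  obtain ⟨w, hw, hw1⟩ := norm1 h1
  obtain ⟨v, hv, hv2, hvF⟩ := chk_spec (F := [b1]) (by simp [b1]) memb.2.1 chk2 (w e2) (hw.root h2)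
    (by simp only [List.mem_singleton, forall_eq]; rw [d21, ← hw1, hw.1, dot_comm', h12])
  refine ⟨w.trans v, hw.trans' hv, ?_, ?_⟩
  · simp [hw1, hvF b1 (by simp)]
  · simp [hv2]

theorem norm3 {e1 e2 e3 : Fin 8 → ℝ} (h1 : isRoot e1) (h2 : isRoot e2) (h3 : isRoot e3)
    (h12 : dot e1 e2 = 0) (h23 : dot e2 e3 = 0) (h13 : dot e1 e3 = 1) :
    ∃ w, IsWeyl w ∧ w e1 = toVec b1 ∧ w e2 = toVec b2 ∧ w e3 = toVec b3 := by
  obtain ⟨w, hw, hw1, hw2⟩ := norm2 h1 h2 h12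
  obtain ⟨v, hv, hv2, hvF⟩ := chk_spec (F := [b1, b2]) (by simp [b1, b2]) memb.2.2 chk3 (w e3)
    (hw.root h3)
    (by
      intro f hf
      simp only [List.mem_cons, List.not_mem_nil, or_false] at hf
      rcases hf with rfl | rfl
      · rw [d31, ← hw1, hw.1, dot_comm', h13]
      · rw [d32, ← hw2, hw.1, dot_comm', h23])
  refine ⟨w.trans v, hw.trans' hv, ?_, ?_, ?_⟩
  · simp [hw1, hvF b1 (by simp)]
  · simp [hw2, hvF b2 (by simp)]
  · simp [hv2]

theorem ncard_transfer {w} (hw : IsWeyl w) (c : List (List ℤ × ℤ)) (P : (Fin 8 → ℝ) → Prop)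
    (hc : ∀ p ∈ c, p.1.length = 8)
    (hP : ∀ e, P e ↔ ∀ p ∈ c, dot (w e) (toVec p.1) = (p.2 : ℝ) / 4) :
    {e | isRoot e ∧ P e}.ncard = (sel c).length := by
  rw [← ncard_sel c hc, ← Set.ncard_image_of_injective _ w.injective]
  congr 1
  ext e
  simp only [Set.mem_image, Set.mem_ofPred_eq]
  constructor
  · rintro ⟨x, ⟨hx, hx'⟩, rfl⟩
    exact ⟨hw.root hx, (hP x).1 hx'⟩
  · rintro ⟨he, h⟩
    exact ⟨w.symm e, ⟨hw.symm'.root he, (hP _).2 (by simpa using h)⟩, by simp⟩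

theorem ncard_fib {α β : Type*} (S : Set α) (hS : S.Finite) (T : α → Set β) (n : ℕ)
    (hn : n ≠ 0) (h : ∀ a ∈ S, (T a).ncard = n) :
    {p : α × β | p.1 ∈ S ∧ p.2 ∈ T p.1}.ncard = S.ncard * n := by
  let e : {p : α × β | p.1 ∈ S ∧ p.2 ∈ T p.1} ≃ Σ a : S, T a :=
    { toFun := fun p => ⟨⟨p.1.1, p.2.1⟩, ⟨p.1.2, p.2.2⟩⟩
      invFun := fun q => ⟨(q.1.1, q.2.1), q.1.2, q.2.2⟩
      left_inv := fun _ => rfl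
      right_inv := fun _ => rfl }
  haveI := hS.fintype
  haveI : ∀ a : S, Finite (T a) := fun a =>
    (Set.finite_of_ncard_ne_zero (by rw [h a a.2]; exact hn)).to_subtype
  rw [← Nat.card_coe_set_eq, Nat.card_congr e, Nat.card_sigma]
  simp only [Nat.card_coe_set_eq]
  rw [Finset.sum_congr rfl (fun a _ => h a.1 a.2)]
  rw [Finset.sum_const, Finset.card_univ, smul_eq_mul, ← Nat.card_eq_fintype_card,
    Nat.card_coe_set_eq]

theorem card_roots : {e : Fin 8 → ℝ | isRoot e}.ncard = 240 := by
  have := ncard_sel [] (by simp)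
  rw [cnt0] at this
  simpa using this

/-- The set `B` of triples of roots `(e1,e2,e3)` with `e1·e2 = 0`,
`e2·e3 = 0`, `e1·e3 = 1` has exactly 967680 elements, the Weyl group acts
transitively on it, and for every element of `B` there are exactly 6 roots having
dot product 1 with all three components. -/
theorem stmt_6 :
    {v : (Fin 8 → ℝ) × (Fin 8 → ℝ) × (Fin 8 → ℝ) |
      isRoot v.1 ∧ isRoot v.2.1 ∧ isRoot v.2.2 ∧
      dot v.1 v.2.1 = 0 ∧ dot v.2.1 v.2.2 = 0 ∧ dot v.1 v.2.2 = 1}.ncard = 967680 ∧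
    (∀ e1 e2 e3 f1 f2 f3 : Fin 8 → ℝ,
      isRoot e1 → isRoot e2 → isRoot e3 → isRoot f1 → isRoot f2 → isRoot f3 →
      dot e1 e2 = 0 → dot e2 e3 = 0 → dot e1 e3 = 1 →
      dot f1 f2 = 0 → dot f2 f3 = 0 → dot f1 f3 = 1 →
      ∃ w : (Fin 8 → ℝ) ≃ₗ[ℝ] (Fin 8 → ℝ),
        IsWeyl w ∧ w e1 = f1 ∧ w e2 = f2 ∧ w e3 = f3) ∧
    (∀ e1 e2 e3 : Fin 8 → ℝ, isRoot e1 → isRoot e2 → isRoot e3 →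
      dot e1 e2 = 0 → dot e2 e3 = 0 → dot e1 e3 = 1 →
      {e | isRoot e ∧ dot e e1 = 1 ∧ dot e e2 = 1 ∧ dot e e3 = 1}.ncard = 6) := by
  refine ⟨?_, ?_, ?_⟩
  · have hfin : {e : Fin 8 → ℝ | isRoot e}.Finite :=
      Set.finite_of_ncard_ne_zero (by rw [card_roots]; norm_num)
    have k2 : ∀ e1, isRoot e1 → {e | isRoot e ∧ dot e1 e = 0}.ncard = 126 := by
      intro e1 h1
      obtain ⟨w, hw, hw1⟩ := norm1 h1
      rw [← cnt1]
      refine ncard_transfer hw _ _ (by simp [b1]) fun e => ?_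
      simp only [List.mem_singleton, forall_eq]
      rw [← hw1, hw.1, dot_comm']
      simp
    have k3 : ∀ e1 e2, isRoot e1 → isRoot e2 → dot e1 e2 = 0 →
        {e | isRoot e ∧ (dot e2 e = 0 ∧ dot e1 e = 1)}.ncard = 32 := by
      intro e1 e2 h1 h2 h12
      obtain ⟨w, hw, hw1, hw2⟩ := norm2 h1 h2 h12
      rw [← cnt2]
      refine ncard_transfer hw _ _ (by simp [b1, b2]) fun e => ?_
      simp only [List.mem_cons, List.not_mem_nil, or_false, forall_eq_or_imp, forall_eq]
      rw [← hw1, ← hw2, hw.1, hw.1, dot_comm' e2, dot_comm' e1]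
      norm_num
      tauto
    have k23 : ∀ e1 ∈ {e : Fin 8 → ℝ | isRoot e},
        {p : (Fin 8 → ℝ) × (Fin 8 → ℝ) | p.1 ∈ {e | isRoot e ∧ dot e1 e = 0} ∧
          p.2 ∈ {e | isRoot e ∧ (dot p.1 e = 0 ∧ dot e1 e = 1)}}.ncard = 126 * 32 := by
      intro e1 h1
      have := ncard_fib {e | isRoot e ∧ dot e1 e = 0} (hfin.subset fun e h => h.1)
        (fun e2 => {e | isRoot e ∧ (dot e2 e = 0 ∧ dot e1 e = 1)}) 32 (by norm_num)
        (fun e2 h2 => k3 e1 e2 h1 h2.1 h2.2)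
      rwa [k2 e1 h1] at this
    have := ncard_fib {e : Fin 8 → ℝ | isRoot e} hfin _ (126 * 32) (by norm_num) k23
    rw [card_roots] at this
    rw [show (967680 : ℕ) = 240 * (126 * 32) by norm_num, ← this]
    congr 1
    ext ⟨x, y, z⟩
    simp only [Set.mem_ofPred_eq]
    tauto
  · intro e1 e2 e3 f1 f2 f3 he1 he2 he3 hf1 hf2 hf3 h1 h2 h3 g1 g2 g3
    obtain ⟨w, hw, hw1, hw2, hw3⟩ := norm3 he1 he2 he3 h1 h2 h3
    obtain ⟨v, hv, hv1, hv2, hv3⟩ := norm3 hf1 hf2 hf3 g1 g2 g3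
    refine ⟨w.trans v.symm, hw.trans' hv.symm', ?_, ?_, ?_⟩
    · simp [hw1, ← hv1]
    · simp [hw2, ← hv2]
    · simp [hw3, ← hv3]
  · intro e1 e2 e3 he1 he2 he3 h1 h2 h3
    obtain ⟨w, hw, hw1, hw2, hw3⟩ := norm3 he1 he2 he3 h1 h2 h3
    rw [← cnt3]
    refine ncard_transfer hw _ _ (by simp [b1, b2, b3]) fun e => ?_
    simp only [List.mem_cons, List.not_mem_nil, or_false, forall_eq_or_imp, forall_eq]
    rw [← hw1, ← hw2, ← hw3, hw.1, hw.1, hw.1]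
    norm_num
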